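/- Let q be a prime power, A an n×n hermitian matrix over F_{q^2} of rank r. Then there exists an invertible n×n matrix P over F_{q^2} such that A = P D P*, where D is the diagonal matrix with r ones followed by n−r zeros on the diagonal. In particular, A is a sum of r matrices of the form x x* with x ∈ F_{q^2}^n. -/

import Mathlib

/-!
The map `σ x = x ^ q` is an involutive field automorphism, so it makes `F` a star ring and
`(P.map (· ^ q))ᵀ` is `Pᴴ`. The argument works over any field with an involution for which

* the trace `x + star x` is not identically zero (here `x + x ^ q` has at most `q < q ^ 2` roots), and
* every fixed element is a norm `d * star d` (here because the unit group is cyclic of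
  order `(q - 1) * (q + 1)`).

By the first property a nonzero hermitian `A` has a vector `u` with `c = u* A u ≠ 0`
(`exists_dotProduct_ne_zero`). By the second, `c⁻¹ = d * star d`, and subtracting `x x*` with
`x = d A u` puts `u` into the kernel while keeping every vector that was already there, so the rank
drops (`exists_rank_sub_lt`). By induction `A` is a sum of `r = rank A` matrices `x x*`, that is
`A = X X*` with `X` having `r` columns. As `rank A = r`, these columns are linearly independent;
completing them to a basis gives the invertible matrix `P`.
-/

open Matrix

section Involution

variable {F : Type} [Field F] [StarRing F] {n : ℕ}

theorem exists_dotProduct_ne_zero (htr : ∃ x : F, x + star x ≠ 0)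
    (A : Matrix (Fin n) (Fin n) F) (hA : Aᴴ = A) (h0 : A ≠ 0) :
    ∃ u : Fin n → F, star u ⬝ᵥ A *ᵥ u ≠ 0 := by
  classical
  have hent : ∀ i j, star (A i j) = A j i := fun i j => by
    conv_rhs => rw [← hA]
    rfl
  by_contra! hall
  apply h0
  have hdiag : ∀ i, A i i = 0 := fun i => by
    simpa [← Pi.single_star] using hall (Pi.single i 1)
  ext i j
  by_contra hb
  rw [Matrix.zero_apply] at hb
  obtain ⟨x, hx⟩ := htr
  -- As the diagonal vanishes, at `u = e_i + t e_j` the form takes the value `A i j * t + star (A i j * t)`.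
  have h := hall (Pi.single i 1 + Pi.single j (x / A i j))
  apply hx
  have e1 : A i j * (x / A i j) = x := by field_simp
  have e2 : star (x / A i j) * A j i = star x := by
    rw [← hent i j, ← star_mul, e1]
  simp only [star_add, ← Pi.single_star, Matrix.mulVec_add, dotProduct_add, add_dotProduct,
    single_dotProduct, Matrix.mulVec_single, Pi.smul_apply, Matrix.col_apply,
    MulOpposite.smul_eq_mul_unop, MulOpposite.unop_op, star_one, one_mul, mul_one, hdiag,
    zero_mul, mul_zero, add_zero, zero_add, e1, e2] at h
  rw [add_comm]
  exact h

theorem exists_rank_sub_lt (htr : ∃ x : F, x + star x ≠ 0)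
    (hnorm : ∀ c : F, star c = c → ∃ d, d * star d = c)
    (A : Matrix (Fin n) (Fin n) F) (hA : Aᴴ = A) (h0 : A ≠ 0) :
    ∃ x : Fin n → F, (A - vecMulVec x (star x)).rank < A.rank := by
  obtain ⟨u, hu⟩ := exists_dotProduct_ne_zero htr A hA h0
  have hsA : star (A *ᵥ u) = star u ᵥ* A := by rw [star_mulVec, hA]
  set c := star u ⬝ᵥ A *ᵥ u with hc
  have hcs : star c = c := by
    rw [hc, ← star_dotProduct_star, star_star, hsA, ← dotProduct_mulVec]
  obtain ⟨d, hd⟩ := hnorm c⁻¹ (by rw [star_inv₀, hcs])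
  refine ⟨d • A *ᵥ u, ?_⟩
  set B := A - vecMulVec (d • A *ᵥ u) (star (d • A *ᵥ u)) with hB
  have hBw : ∀ w, B *ᵥ w = A *ᵥ w - (c⁻¹ * (star u ⬝ᵥ A *ᵥ w)) • A *ᵥ u := fun w => by
    rw [hB, sub_mulVec, vecMulVec_mulVec, star_smul, hsA, smul_dotProduct, ← dotProduct_mulVec,
      ← hd]
    ext i
    simp only [Pi.sub_apply, Pi.smul_apply, MulOpposite.smul_eq_mul_unop, MulOpposite.unop_op,
      smul_eq_mul]
    ring
  have hker : LinearMap.ker A.mulVecLin < LinearMap.ker B.mulVecLin := by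
    refine lt_of_le_of_ne (fun w hw => ?_) (fun h => ?_)
    · rw [LinearMap.mem_ker, mulVecLin_apply] at hw ⊢
      simp [hBw, hw]
    · have : u ∈ LinearMap.ker A.mulVecLin := by
        rw [h, LinearMap.mem_ker, mulVecLin_apply, hBw, ← hc, inv_mul_cancel₀ hu, one_smul,
          sub_self]
      rw [LinearMap.mem_ker, mulVecLin_apply] at this
      apply hu
      rw [hc, this, dotProduct_zero]
  have h1 := Submodule.finrank_lt_finrank_of_lt hker
  have h2 := A.mulVecLin.finrank_range_add_finrank_ker
  have h3 := B.mulVecLin.finrank_range_add_finrank_ker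
  unfold Matrix.rank
  omega

theorem exists_sum_vecMulVec (htr : ∃ x : F, x + star x ≠ 0)
    (hnorm : ∀ c : F, star c = c → ∃ d, d * star d = c) (r : ℕ)
    (A : Matrix (Fin n) (Fin n) F) (hA : Aᴴ = A) (hr : A.rank ≤ r) :
    ∃ v : Fin r → (Fin n → F), A = ∑ i, vecMulVec (v i) (star (v i)) := by
  induction r generalizing A with
  | zero =>
    have : A = 0 := by
      by_contra h0
      obtain ⟨x, hx⟩ := exists_rank_sub_lt htr hnorm A hA h0
      omega
    exact ⟨0, by simp [this]⟩
  | succ r ih =>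
    by_cases h0 : A = 0
    · exact ⟨0, by simp [h0]⟩
    obtain ⟨x, hx⟩ := exists_rank_sub_lt htr hnorm A hA h0
    obtain ⟨v, hv⟩ := ih (A - vecMulVec x (star x))
      (by rw [conjTranspose_sub, hA, conjTranspose_vecMulVec, star_star]) (by omega)
    refine ⟨Fin.cons x v, ?_⟩
    rw [Fin.sum_univ_succ]
    simp only [Fin.cons_zero, Fin.cons_succ]
    rw [← hv]
    abel

/-- The vectors in a decomposition of `A` into `rank A` terms `x x*` are linearly independent, since
`A = X X*` for the matrix `X` with these columns. -/
theorem linearIndependent_of_sum_vecMulVec {r : ℕ} (A : Matrix (Fin n) (Fin n) F)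
    (hr : A.rank = r) (v : Fin r → (Fin n → F)) (hv : A = ∑ i, vecMulVec (v i) (star (v i))) :
    LinearIndependent F v := by
  have hX : A = (Matrix.of v)ᵀ * ((Matrix.of v)ᵀ)ᴴ := by
    rw [hv]
    ext i j
    simp [Matrix.sum_apply, vecMulVec_apply, Matrix.mul_apply]
  have h1 : r ≤ (Matrix.of v)ᵀ.rank := by
    refine hr.symm.le.trans ?_
    conv_lhs => rw [hX]
    exact rank_mul_le_left _ _
  rw [linearIndependent_iff_card_le_finrank_span, Fintype.card_fin]
  rw [rank_eq_finrank_span_cols] at h1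
  exact h1

theorem exists_isUnit_det_of_linearIndependent {r : ℕ} (hrn : r ≤ n)
    (v : Fin r → (Fin n → F)) (hli : LinearIndependent F v) :
    ∃ P : Matrix (Fin n) (Fin n) F, IsUnit P.det ∧
      ∑ i, vecMulVec (v i) (star (v i)) =
        P * Matrix.diagonal (fun i : Fin n => if (i : ℕ) < r then (1 : F) else 0) * Pᴴ := by
  classical
  obtain ⟨m, rfl⟩ := Nat.exists_eq_add_of_le hrn
  let b := Module.Basis.sumExtend hli
  have hfin : Finite (Fin r ⊕ Module.Basis.sumExtendIndex hli) := Module.Finite.finite_basis b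
  have : Finite (Module.Basis.sumExtendIndex hli) := Finite.sum_right (Fin r)
  have hcard : Nat.card (Module.Basis.sumExtendIndex hli) = m := by
    have h := Module.finrank_eq_nat_card_basis b
    rw [Nat.card_sum] at h
    simp at h
    simpa using h.symm
  let e : Fin r ⊕ Module.Basis.sumExtendIndex hli ≃ Fin (r + m) :=
    ((Equiv.refl _).sumCongr (Finite.equivFinOfCardEq hcard)).trans finSumFinEquiv
  let b' := b.reindex e
  have hb' : ∀ i : Fin r, b' (Fin.castAdd m i) = v i := fun i => by
    have : e.symm (Fin.castAdd m i) = Sum.inl i := by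
      rw [Equiv.symm_apply_eq]; simp [e]
    simp only [b', Module.Basis.reindex_apply, this]
    simp only [b, Module.Basis.sumExtend, Module.Basis.reindex_apply, Module.Basis.extend_apply_self]
    rfl
  refine ⟨(Matrix.of b')ᵀ, ?_, ?_⟩
  · rw [← Matrix.isUnit_iff_isUnit_det, ← Matrix.linearIndependent_cols_iff_isUnit]
    exact b'.linearIndependent
  · ext i j
    rw [Matrix.mul_apply, Fin.sum_univ_add]
    simp [Matrix.sum_apply, vecMulVec_apply, hb']

end Involution

section FiniteField

variable {F : Type} [Field F] [Fintype F] {q : ℕ}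

theorem exists_ringHom_eq_pow (hq : IsPrimePow q) (hF : Fintype.card F = q ^ 2) :
    ∃ σ : F →+* F, ∀ x, σ x = x ^ q := by
  obtain ⟨p, k, hp, hk, rfl⟩ := hq
  have hp' : p.Prime := hp.nat_prime
  have : Fact p.Prime := ⟨hp'⟩
  have : CharP F p := by
    obtain ⟨p', hp1⟩ := CharP.exists F
    obtain ⟨m, hpm, hm⟩ := FiniteField.card F p'
    rw [hF, ← pow_mul] at hm
    have : p' = p := by
      have h : p' ∣ p ^ (k * 2) := hm ▸ dvd_pow_self p' m.ne_zero
      exact (Nat.prime_dvd_prime_iff_eq hpm hp').1 (hpm.dvd_of_dvd_pow h)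
    exact this ▸ hp1
  exact ⟨iterateFrobenius F p k, fun x => iterateFrobenius_def p k x⟩

theorem exists_add_pow_ne_zero (hq : 1 < q) (hF : Fintype.card F = q ^ 2) :
    ∃ x : F, x + x ^ q ≠ 0 := by
  classical
  by_contra! h
  open Polynomial in
  have hdeg : (X ^ q + X : F[X]).natDegree = q := by
    rw [natDegree_add_eq_left_of_natDegree_lt] <;> simp [hq]
  open Polynomial in
  have h0 : (X ^ q + X : F[X]) = 0 := by
    refine eq_zero_of_natDegree_lt_card_of_eval_eq_zero' _ Finset.univ (fun x _ => ?_) ?_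
    · simpa [add_comm] using h x
    · rw [hdeg, Finset.card_univ, hF]
      nlinarith
  rw [h0] at hdeg
  simp at hdeg
  omega

/-- If `c = g ^ m` for a generator `g` of `Fˣ`, then `c ^ (q - 1) = 1` forces `q + 1 ∣ m`. -/
theorem exists_mul_pow_eq (hq : 1 < q) (hF : Fintype.card F = q ^ 2) (c : F) (hc : c ^ q = c) :
    ∃ d : F, d * d ^ q = c := by
  classical
  by_cases h0 : c = 0
  · exact ⟨0, by simp [h0]⟩
  obtain ⟨g, hg⟩ := IsCyclic.exists_monoid_generator (α := Fˣ)
  obtain ⟨m, hm⟩ := Submonoid.mem_powers_iff _ _ |>.1 (hg (Units.mk0 c h0))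
  obtain ⟨s, rfl⟩ := Nat.exists_eq_add_of_lt hq
  have hord : orderOf g = (s + 1) * (s + 3) := by
    rw [orderOf_eq_card_of_forall_mem_powers hg, Nat.card_eq_fintype_card, Fintype.card_units, hF]
    have : (1 + s + 1) ^ 2 = (s + 1) * (s + 3) + 1 := by ring
    omega
  have h1 : g ^ (m * (s + 1)) = 1 := by
    rw [pow_mul, hm]
    ext
    rw [Units.val_pow_eq_pow_val, Units.val_mk0, Units.val_one]
    apply mul_left_cancel₀ h0
    rw [← pow_succ', mul_one]
    convert hc using 2
    ring
  have h2 := orderOf_dvd_of_pow_eq_one h1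
  rw [hord, mul_comm] at h2
  obtain ⟨t, rfl⟩ := Nat.dvd_of_mul_dvd_mul_right (Nat.succ_pos s) h2
  refine ⟨((g ^ t : Fˣ) : F), ?_⟩
  have h3 := congrArg Units.val hm
  rw [Units.val_mk0] at h3
  rw [← h3, ← pow_succ', ← Units.val_pow_eq_pow_val, ← pow_mul]
  congr 2
  ring

end FiniteField

/-- A hermitian matrix of rank `r` over the field with `q^2` elements can be
written as `P D P*` with `P` invertible and `D = diag(1,…,1,0,…,0)` with `r`
ones; in particular it is a sum of `r` matrices of the form `x x*`. -/
theorem hermitian_congruent_diagonal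
    (q : ℕ) (hq : IsPrimePow q)
    (F : Type) [Field F] [Fintype F]
    (hF : Fintype.card F = q ^ 2) (n : ℕ)
    (A : Matrix (Fin n) (Fin n) F)
    (hHerm : (A.map (· ^ q))ᵀ = A) (r : ℕ) (hr : A.rank = r) :
    (∃ P : Matrix (Fin n) (Fin n) F, IsUnit P.det ∧
      A = P * Matrix.diagonal (fun i : Fin n => if (i : ℕ) < r then (1 : F) else 0) *
        (P.map (· ^ q))ᵀ) ∧
    (∃ v : Fin r → (Fin n → F),
      A = ∑ i, Matrix.vecMulVec (v i) (fun t => (v i t) ^ q)) := by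
  obtain ⟨σ, hσ⟩ := exists_ringHom_eq_pow hq hF
  let _ : StarRing F :=
    { star := fun x => x ^ q
      star_involutive := fun x => by
        change (x ^ q) ^ q = x
        rw [← pow_mul, ← sq, ← hF, FiniteField.pow_card]
      star_mul := fun x y => by
        change (x * y) ^ q = y ^ q * x ^ q
        rw [mul_pow, mul_comm]
      star_add := fun x y => by
        change (x + y) ^ q = x ^ q + y ^ q
        rw [← hσ, map_add, hσ, hσ] }
  -- With this star, `(P.map (· ^ q))ᵀ` is `Pᴴ` by definition.
  have hA : Aᴴ = A := by
    conv_rhs => rw [← hHerm]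
    rfl
  obtain ⟨v, hv⟩ := exists_sum_vecMulVec (exists_add_pow_ne_zero hq.one_lt hF)
    (exists_mul_pow_eq hq.one_lt hF) r A hA hr.le
  have hrn : r ≤ n := by
    rw [← hr]
    simpa using A.rank_le_width
  obtain ⟨P, hP, hPA⟩ := exists_isUnit_det_of_linearIndependent hrn v
    (linearIndependent_of_sum_vecMulVec A hr v hv)
  exact ⟨⟨P, hP, hv.trans hPA⟩, v, hv⟩
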